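/- Suppose there exists θ^L ∈ (0,1) such that u''(θ) < 0 for all θ ∈ [0,θ^L) at which u'' exists, and u''(θ) > 0 for all θ ∈ (θ^L,1] at which u'' exists. If there exists θ_*^L ∈ (θ^L,1) such that u(m_*^L) + u'(m_*^L)·(θ_*^L − m_*^L) = u(θ_*^L), where m_*^L = E_F[θ|(0,θ_*^L)], then the open pooling set P_* = [0,θ_*^L) is optimal for u, and m_*^L ∈ (0,θ^L). -/

import Mathlib

open MeasureTheory Set
open scoped Classical

noncomputable section

/-- CDF associated with the density `f` (relevant on `[0,1]`): `F(x) = ∫_0^x f`. -/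
def cdfF (f : ℝ → ℝ) (x : ℝ) : ℝ := ∫ t in (0:ℝ)..x, f t

/-- Conditional mean `E_F[θ | (ξ,ζ)]` of `θ` on the interval `(ξ, ζ)` under density `f`. -/
def condMean (f : ℝ → ℝ) (ξ ζ : ℝ) : ℝ :=
  (∫ t in ξ..ζ, t * f t) / (∫ t in ξ..ζ, f t)

/-- `f` is a strictly positive density of a probability measure on `[0,1]`. -/
def IsDensity (f : ℝ → ℝ) : Prop :=
  (∀ θ ∈ Icc (0:ℝ) 1, 0 < f θ) ∧ IntegrableOn f (Icc (0:ℝ) 1) ∧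
    (∫ t in (0:ℝ)..1, f t) = 1

/-- An open pooling set: a relatively open subset of `[0,1]`. -/
def IsPoolingSet (P : Set ℝ) : Prop :=
  ∃ U : Set ℝ, IsOpen U ∧ P = U ∩ Icc (0:ℝ) 1

/-- Left endpoint `ξ_i` of the interval component of `θ` in `P`. -/
def compInf (P : Set ℝ) (θ : ℝ) : ℝ := sInf (connectedComponentIn P θ)

/-- Right endpoint `ζ_i` of the interval component of `θ` in `P`. -/
def compSup (P : Set ℝ) (θ : ℝ) : ℝ := sSup (connectedComponentIn P θ)

/-- The posterior-mean map induced by the pooling set `P`: states in a pooled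
interval are mapped to the conditional mean of that interval, other states to
themselves. -/
def poolMean (f : ℝ → ℝ) (P : Set ℝ) (θ : ℝ) : ℝ :=
  if θ ∈ P then condMean f (compInf P θ) (compSup P θ) else θ

/-- The induced distribution `G_P` of posterior means. -/
def Gp (f : ℝ → ℝ) (P : Set ℝ) (θ : ℝ) : ℝ :=
  if θ ∈ P then
    (if θ < condMean f (compInf P θ) (compSup P θ) then cdfF f (compInf P θ)
     else cdfF f (compSup P θ))
  else cdfF f θ

/-- `Γ_P(θ) = ∫_0^θ G_P(t) dt`. -/
def Gam (f : ℝ → ℝ) (P : Set ℝ) (θ : ℝ) : ℝ := ∫ t in (0:ℝ)..θ, Gp f P t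

/-- The value `∫_0^1 u(θ) dG_P(θ)` of the pooling set `P` under payoff `u`,
written as the expectation of `u` composed with the posterior-mean map. -/
def poolValue (f : ℝ → ℝ) (u : ℝ → ℝ) (P : Set ℝ) : ℝ :=
  ∫ θ in (0:ℝ)..1, u (poolMean f P θ) * f θ

/-- `P` is an optimal pooling set for `u`. -/
def IsOptimal (f : ℝ → ℝ) (u : ℝ → ℝ) (P : Set ℝ) : Prop :=
  IsPoolingSet P ∧ ∀ Q : Set ℝ, IsPoolingSet Q → poolValue f u Q ≤ poolValue f u P

/-- `u` is continuously differentiable on `[0,1]` with derivative `u'`, and `u'`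
is absolutely continuous with integrable a.e. derivative `u''` (encoded via the
fundamental theorem of calculus). -/
def C1AC (u u' u'' : ℝ → ℝ) : Prop :=
  (∀ θ ∈ Icc (0:ℝ) 1, HasDerivAt u (u' θ) θ) ∧
  ContinuousOn u' (Icc (0:ℝ) 1) ∧
  IntegrableOn u'' (Icc (0:ℝ) 1) ∧
  (∀ θ ∈ Icc (0:ℝ) 1, u' θ = u' 0 + ∫ t in (0:ℝ)..θ, u'' t)

/-! Pooling replaces each state by the mean of its component, so by Jensen's inequality it can only
lower the expectation of a convex function. Hence the integral of any continuous convex function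
`p ≥ u` bounds the value of every pooling set. The bound is attained by `[0, b)` when `p` is affine
on `[0, b]`, equals `u` on `[b, 1]` and touches `u` at the mean `m` of `[0, b)`. The tangent line of
`u` at `m`, which meets the graph of `u` again at `b`, prolonged by `u` itself, is such a function:
the gap between `u` and the line is nonpositive up to `b`, and convex and monotone from `b` on. -/

section TangentLine

/-- The line of slope `s` through the point of the graph of `u` above `m`. The slope is a parameter
so that the same notion covers supporting lines of functions that are not differentiable. -/
def tangentLine (u : ℝ → ℝ) (s m x : ℝ) : ℝ := u m + s * (x - m)

/-- The signed height of the graph of `u` above its tangent line at `m`. -/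
def tangentGap (u : ℝ → ℝ) (s m x : ℝ) : ℝ := u x - tangentLine u s m x

variable {u : ℝ → ℝ} {S : Set ℝ} {s m : ℝ}

lemma convexOn_tangentLine (u : ℝ → ℝ) (s m : ℝ) (hS : Convex ℝ S) :
    ConvexOn ℝ S (tangentLine u s m) :=
  ⟨hS, fun x _ y _ α β _ _ hαβ => by
    obtain rfl : β = 1 - α := by linarith
    simp only [tangentLine, smul_eq_mul]
    exact (by ring : _ = _).le⟩

lemma convexOn_tangentGap (hu : ConvexOn ℝ S u) (s m : ℝ) : ConvexOn ℝ S (tangentGap u s m) := by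
  have h_eq : tangentGap u s m = u + tangentLine (-u) (-s) m := by
    ext x
    simp only [tangentGap, tangentLine, Pi.add_apply, Pi.neg_apply]
    ring
  rw [h_eq]
  exact hu.add (convexOn_tangentLine (-u) (-s) m hu.1)

lemma le_tangentLine_of_hasDerivAt (hu : ConcaveOn ℝ S u) (hs : HasDerivAt u s m) (hm : m ∈ S)
    {x : ℝ} (hx : x ∈ S) : u x ≤ tangentLine u s m x := by
  unfold tangentLine
  rcases lt_trichotomy x m with hxm | rfl | hmx
  · have h_slope := hu.le_slope_of_hasDerivAt hx hm hxm hs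
    rw [slope_def_field, le_div_iff₀ (sub_pos.2 hxm)] at h_slope
    linarith
  · simp
  · have h_slope := hu.slope_le_of_hasDerivAt hm hx hmx hs
    rw [slope_def_field, div_le_iff₀ (sub_pos.2 hmx)] at h_slope
    linarith

lemma exists_tangentLine_le_of_mem_interior (hu : ConvexOn ℝ S u) (hm : m ∈ interior S) :
    ∃ s, ∀ x ∈ S, tangentLine u s m x ≤ u x := by
  refine ⟨derivWithin u (Ioi m) m, fun x hx => ?_⟩
  unfold tangentLine
  rcases lt_trichotomy x m with hxm | rfl | hmx
  · have h_slope := (hu.slope_le_leftDeriv_of_mem_interior hx hm hxm).trans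
      (hu.leftDeriv_le_rightDeriv_of_mem_interior hm)
    rw [slope_def_field, div_le_iff₀ (sub_pos.2 hxm)] at h_slope
    linarith
  · simp
  · have h_slope := hu.rightDeriv_le_slope_of_mem_interior hm hx hmx
    rw [slope_def_field, le_div_iff₀ (sub_pos.2 hmx)] at h_slope
    linarith

end TangentLine

section ConvexOnReal

variable {g : ℝ → ℝ} {b c d : ℝ}

lemma monotoneOn_Icc_of_convexOn_of_le (hg : ConvexOn ℝ (Icc c d) g) (hcb : c < b)
    (h_le : g c ≤ g b) : MonotoneOn g (Icc b d) := by
  intro x hx y hy hxy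
  have hc : c ∈ Icc c d := ⟨le_rfl, hcb.le.trans (hx.1.trans hx.2)⟩
  have h_le_x : g b ≤ g x := hg.le_right_of_left_le'' hc ⟨hcb.le.trans hx.1, hx.2⟩ hcb hx.1 h_le
  exact hg.le_right_of_left_le'' hc ⟨hcb.le.trans hy.1, hy.2⟩ (hcb.trans_le hx.1) hxy
    (h_le.trans h_le_x)

lemma convexOn_comp_max (hg : ConvexOn ℝ (Icc b d) g) (h_mono : MonotoneOn g (Icc b d))
    (hbd : b ≤ d) : ConvexOn ℝ (Iic d) fun x => g (max x b) := by
  have h_image : (fun x => max x b) '' Iic d = Icc b d := by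
    ext y
    constructor
    · rintro ⟨x, hx, rfl⟩
      exact ⟨le_max_right x b, max_le hx hbd⟩
    · exact fun hy => ⟨y, hy.2, max_eq_left hy.1⟩
  have h_max : ConvexOn ℝ (Iic d) fun x => max x b :=
    (convexOn_id (convex_Iic d)).sup (convexOn_const b (convex_Iic d))
  rw [← h_image] at hg h_mono
  exact hg.comp h_max h_mono

end ConvexOnReal

section CensorshipPrice

/-- The convex price function that certifies optimality of censorship below `b`: it prolongs the
tangent line of `u` at `m`, followed up to `b`, by `u` itself. The piecewise function is written
with `max` to make it a sum of convex functions. -/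
def censorshipPrice (u : ℝ → ℝ) (s m b x : ℝ) : ℝ :=
  tangentLine u s m x + tangentGap u s m (max x b)

variable {u : ℝ → ℝ} {a b c d m s x : ℝ}

lemma censorshipPrice_of_le (h_tan : tangentLine u s m b = u b) (hx : x ≤ b) :
    censorshipPrice u s m b x = tangentLine u s m x := by
  simp [censorshipPrice, tangentGap, max_eq_right hx, h_tan]

lemma censorshipPrice_of_ge (hx : b ≤ x) : censorshipPrice u s m b x = u x := by
  simp [censorshipPrice, tangentGap, max_eq_left hx]

lemma continuousOn_censorshipPrice (hu : ContinuousOn u (Icc a d)) (hb : b ∈ Icc a d) :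
    ContinuousOn (censorshipPrice u s m b) (Icc a d) := by
  have h_max : ContinuousOn (fun x => u (max x b)) (Icc a d) :=
    hu.comp (by fun_prop) fun x hx => ⟨le_max_of_le_left hx.1, max_le hx.2 hb.2⟩
  unfold censorshipPrice tangentGap tangentLine
  exact ContinuousOn.add (by fun_prop) (h_max.sub (by fun_prop))

lemma lt_of_tangentLine_eq (hu : StrictConvexOn ℝ (Icc c d) u) (hs : HasDerivAt u s m)
    (hmb : m < b) (hbd : b ≤ d) (h_tan : tangentLine u s m b = u b) : m < c := by
  by_contra! hcm
  have h_slope := hu.lt_slope_of_hasDerivAt ⟨hcm, hmb.le.trans hbd⟩ ⟨hcm.trans hmb.le, hbd⟩ hmb hs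
  rw [slope_def_field, lt_div_iff₀ (sub_pos.2 hmb)] at h_slope
  unfold tangentLine at h_tan
  linarith

lemma tangentGap_nonpos (h_concave : ConcaveOn ℝ (Icc a c) u) (h_convex : ConvexOn ℝ (Icc c d) u)
    (hs : HasDerivAt u s m) (hm : m ∈ Icc a c) (hb : b ∈ Icc c d)
    (h_tan : tangentLine u s m b = u b) (hx : x ∈ Icc a b) : tangentGap u s m x ≤ 0 := by
  have h_left : ∀ y ∈ Icc a c, tangentGap u s m y ≤ 0 := fun y hy =>
    sub_nonpos.2 (le_tangentLine_of_hasDerivAt h_concave hs hm hy)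
  rcases le_total x c with hxc | hcx
  · exact h_left x ⟨hx.1, hxc⟩
  · calc tangentGap u s m x
        ≤ max (tangentGap u s m c) (tangentGap u s m b) :=
          (convexOn_tangentGap h_convex s m).le_max_of_mem_Icc
            ⟨le_rfl, hb.1.trans hb.2⟩ hb ⟨hcx, hx.2⟩
      _ ≤ 0 := max_le (h_left c ⟨hm.1.trans hm.2, le_rfl⟩) (sub_nonpos.2 h_tan.ge)

lemma convexOn_censorshipPrice (h_concave : ConcaveOn ℝ (Icc a c) u)
    (h_convex : ConvexOn ℝ (Icc c d) u) (hs : HasDerivAt u s m) (hm : m ∈ Icc a c)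
    (hb : b ∈ Ioc c d) (h_tan : tangentLine u s m b = u b) :
    ConvexOn ℝ (Iic d) (censorshipPrice u s m b) := by
  have h_gap := convexOn_tangentGap h_convex s m
  have h_gap_c : tangentGap u s m c ≤ tangentGap u s m b := by
    rw [show tangentGap u s m b = 0 from sub_eq_zero.2 h_tan.symm]
    exact tangentGap_nonpos h_concave h_convex hs hm (Ioc_subset_Icc_self hb) h_tan
      ⟨hm.1.trans hm.2, hb.1.le⟩
  exact (convexOn_tangentLine u s m (convex_Iic d)).add <| convexOn_comp_max
    (h_gap.subset (Icc_subset_Icc_left hb.1.le) (convex_Icc b d))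
    (monotoneOn_Icc_of_convexOn_of_le h_gap hb.1 h_gap_c) hb.2

lemma le_censorshipPrice (h_concave : ConcaveOn ℝ (Icc a c) u)
    (h_convex : ConvexOn ℝ (Icc c d) u) (hs : HasDerivAt u s m) (hm : m ∈ Icc a c)
    (hb : b ∈ Icc c d) (h_tan : tangentLine u s m b = u b) (hx : a ≤ x) :
    u x ≤ censorshipPrice u s m b x := by
  rcases le_total x b with hxb | hbx
  · rw [censorshipPrice_of_le h_tan hxb]
    exact sub_nonpos.1 (tangentGap_nonpos h_concave h_convex hs hm hb h_tan ⟨hx, hxb⟩)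
  · exact (censorshipPrice_of_ge hbx).ge

end CensorshipPrice

section CondMean

variable {f : ℝ → ℝ} {a b : ℝ}

lemma integral_tangentLine_condMean_mul (hf : IntervalIntegrable f volume a b)
    (h_mass : ∫ t in a..b, f t ≠ 0) (u : ℝ → ℝ) (s : ℝ) :
    ∫ t in a..b, tangentLine u s (condMean f a b) t * f t
      = u (condMean f a b) * ∫ t in a..b, f t := by
  set m := condMean f a b
  have h_first : IntervalIntegrable (fun t => t * f t) volume a b :=
    hf.continuousOn_mul continuousOn_id
  have h_mean : m * ∫ t in a..b, f t = ∫ t in a..b, t * f t := div_mul_cancel₀ _ h_mass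
  calc ∫ t in a..b, tangentLine u s m t * f t
      = ∫ t in a..b, ((u m - s * m) * f t + s * (t * f t)) :=
        intervalIntegral.integral_congr fun t _ => by simp only [tangentLine]; ring
    _ = (u m - s * m) * (∫ t in a..b, f t) + s * ∫ t in a..b, t * f t := by
        rw [intervalIntegral.integral_add (hf.const_mul _) (h_first.const_mul _),
          intervalIntegral.integral_const_mul, intervalIntegral.integral_const_mul]
    _ = u m * ∫ t in a..b, f t := by rw [← h_mean]; ring

lemma condMean_mem_Ioo (hf : IntervalIntegrable f volume a b) (h_pos : ∀ t ∈ Ioo a b, 0 < f t)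
    (hab : a < b) : condMean f a b ∈ Ioo a b := by
  have h_mass : 0 < ∫ t in a..b, f t :=
    intervalIntegral.intervalIntegral_pos_of_pos_on hf h_pos hab
  have h_first : IntervalIntegrable (fun t => t * f t) volume a b :=
    hf.continuousOn_mul continuousOn_id
  have h_left : 0 < ∫ t in a..b, (t * f t - a * f t) :=
    intervalIntegral.intervalIntegral_pos_of_pos_on (h_first.sub (hf.const_mul a))
      (fun t ht => sub_pos.2 (mul_lt_mul_of_pos_right ht.1 (h_pos t ht))) hab
  have h_right : 0 < ∫ t in a..b, (b * f t - t * f t) :=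
    intervalIntegral.intervalIntegral_pos_of_pos_on ((hf.const_mul b).sub h_first)
      (fun t ht => sub_pos.2 (mul_lt_mul_of_pos_right ht.2 (h_pos t ht))) hab
  rw [intervalIntegral.integral_sub h_first (hf.const_mul a),
    intervalIntegral.integral_const_mul, sub_pos] at h_left
  rw [intervalIntegral.integral_sub (hf.const_mul b) h_first,
    intervalIntegral.integral_const_mul, sub_pos] at h_right
  exact ⟨(lt_div_iff₀ h_mass).2 h_left, (div_lt_iff₀ h_mass).2 h_right⟩

lemma map_condMean_mul_le_integral (hf : IntervalIntegrable f volume a b)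
    (h_pos : ∀ t ∈ Ioo a b, 0 < f t) (hab : a < b) {p : ℝ → ℝ} (hp : ConvexOn ℝ (Icc a b) p)
    (hpf : IntervalIntegrable (fun t => p t * f t) volume a b) :
    p (condMean f a b) * ∫ t in a..b, f t ≤ ∫ t in a..b, p t * f t := by
  have hm : condMean f a b ∈ interior (Icc a b) := by
    rw [interior_Icc]
    exact condMean_mem_Ioo hf h_pos hab
  obtain ⟨s, hs⟩ := exists_tangentLine_le_of_mem_interior hp hm
  have h_mass : 0 < ∫ t in a..b, f t :=
    intervalIntegral.intervalIntegral_pos_of_pos_on hf h_pos hab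
  have h_line : IntervalIntegrable (fun t => tangentLine p s (condMean f a b) t * f t)
      volume a b :=
    hf.continuousOn_mul (by unfold tangentLine; fun_prop)
  rw [← integral_tangentLine_condMean_mul hf h_mass.ne' p s]
  exact intervalIntegral.integral_mono_on_of_le_Ioo hab.le h_line hpf fun t ht =>
    mul_le_mul_of_nonneg_right (hs t (Ioo_subset_Icc_self ht)) (h_pos t ht).le

end CondMean

section SetIntegral

lemma setIntegral_sUnion_mono {α : Type*} [MeasurableSpace α] {μ : Measure α} {C : Set (Set α)}
    (hC : C.Countable) (h_meas : ∀ K ∈ C, MeasurableSet K) (h_disj : C.PairwiseDisjoint id)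
    {g h : α → ℝ} (hg : IntegrableOn g (⋃₀ C) μ) (hh : IntegrableOn h (⋃₀ C) μ)
    (h_le : ∀ K ∈ C, ∫ x in K, g x ∂μ ≤ ∫ x in K, h x ∂μ) :
    ∫ x in ⋃₀ C, g x ∂μ ≤ ∫ x in ⋃₀ C, h x ∂μ := by
  have := hC.to_subtype
  rw [sUnion_eq_iUnion] at hg hh ⊢
  have h_disj' : Pairwise (Function.onFun Disjoint fun K : C => (K : Set α)) := h_disj.subtype _ _
  exact hasSum_le (fun K : C => h_le K K.2)
    (hasSum_integral_iUnion (fun K : C => h_meas K K.2) h_disj' hg)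
    (hasSum_integral_iUnion (fun K : C => h_meas K K.2) h_disj' hh)

lemma intervalIntegrable_of_integrableOn_Icc {g : ℝ → ℝ} {a b c d : ℝ}
    (hg : IntegrableOn g (Icc c d)) (hca : c ≤ a) (hab : a ≤ b) (hbd : b ≤ d) :
    IntervalIntegrable g volume a b :=
  (intervalIntegrable_iff_integrableOn_Icc_of_le hab).2 (hg.mono_set (Icc_subset_Icc hca hbd))

end SetIntegral

section Components

/-- The connected components of a set; for a pooling set, the pooled intervals `(ξ_i, ζ_i)`. -/
def components {α : Type*} [TopologicalSpace α] (Q : Set α) : Set (Set α) :=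
  connectedComponentIn Q '' Q

variable {α : Type*} [TopologicalSpace α]

lemma sUnion_components (Q : Set α) : ⋃₀ components Q = Q := by
  rw [components, sUnion_image]
  exact Subset.antisymm (iUnion₂_subset fun x _ => connectedComponentIn_subset Q x)
    fun x hx => mem_biUnion hx (mem_connectedComponentIn hx)

lemma pairwiseDisjoint_components (Q : Set α) : (components Q).PairwiseDisjoint id := by
  rintro _ ⟨x, _, rfl⟩ _ ⟨y, _, rfl⟩ h_ne
  refine Set.disjoint_left.2 fun z hzx hzy => h_ne ?_
  rw [connectedComponentIn_eq hzx, connectedComponentIn_eq hzy]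

lemma measurableSet_of_mem_components {Q K : Set ℝ} (hK : K ∈ components Q) :
    MeasurableSet K := by
  obtain ⟨x, _, rfl⟩ := hK
  exact isPreconnected_connectedComponentIn.ordConnected.measurableSet

end Components

namespace IsPoolingSet

variable {Q : Set ℝ} {x : ℝ}

lemma subset_Icc (hQ : IsPoolingSet Q) : Q ⊆ Icc 0 1 := by
  obtain ⟨U, _, rfl⟩ := hQ
  exact inter_subset_right

lemma measurableSet (hQ : IsPoolingSet Q) : MeasurableSet Q := by
  obtain ⟨U, hU, rfl⟩ := hQ
  exact hU.measurableSet.inter measurableSet_Icc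

lemma exists_Icc_subset_connectedComponentIn (hQ : IsPoolingSet Q) (hx : x ∈ Q) :
    ∃ a b, a < b ∧ Icc a b ⊆ connectedComponentIn Q x := by
  obtain ⟨U, hU, rfl⟩ := hQ
  obtain ⟨a, b, -, h_nhds, h_sub⟩ := exists_Icc_mem_subset_of_mem_nhds (hU.mem_nhds hx.1)
  obtain ⟨hax, hxb⟩ := Icc_mem_nhds_iff.1 h_nhds
  obtain ⟨hx0, hx1⟩ := hx.2
  refine ⟨max a 0, min b 1, ?_, ?_⟩
  · exact max_lt (lt_min (hax.trans hxb) (hax.trans_le hx1)) (lt_min (hx0.trans_lt hxb) one_pos)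
  · refine isPreconnected_Icc.subset_connectedComponentIn
      ⟨max_le hax.le hx0, le_min hxb.le hx1⟩ ?_
    rw [← Icc_inter_Icc]
    exact inter_subset_inter_left _ h_sub

lemma countable_components (hQ : IsPoolingSet Q) : (components Q).Countable := by
  refine (pairwiseDisjoint_components Q).countable_of_nonempty_interior ?_
  rintro _ ⟨x, hx, rfl⟩
  obtain ⟨a, b, hab, h_sub⟩ := hQ.exists_Icc_subset_connectedComponentIn hx
  exact (nonempty_Ioo.2 hab).mono (interior_Icc (α := ℝ) ▸ interior_mono h_sub)

lemma connectedComponentIn_subset_Icc (hQ : IsPoolingSet Q) (x : ℝ) :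
    connectedComponentIn Q x ⊆ Icc 0 1 :=
  (connectedComponentIn_subset Q x).trans hQ.subset_Icc

lemma bddBelow_component (hQ : IsPoolingSet Q) (x : ℝ) : BddBelow (connectedComponentIn Q x) :=
  bddBelow_Icc.mono (hQ.connectedComponentIn_subset_Icc x)

lemma bddAbove_component (hQ : IsPoolingSet Q) (x : ℝ) : BddAbove (connectedComponentIn Q x) :=
  bddAbove_Icc.mono (hQ.connectedComponentIn_subset_Icc x)

lemma compInf_nonneg (hQ : IsPoolingSet Q) (x : ℝ) : 0 ≤ compInf Q x :=
  Real.sInf_nonneg fun _ hy => (hQ.connectedComponentIn_subset_Icc x hy).1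

lemma compSup_le_one (hQ : IsPoolingSet Q) (x : ℝ) : compSup Q x ≤ 1 :=
  Real.sSup_le (fun _ hy => (hQ.connectedComponentIn_subset_Icc x hy).2) zero_le_one

lemma compInf_lt_compSup (hQ : IsPoolingSet Q) (hx : x ∈ Q) : compInf Q x < compSup Q x := by
  obtain ⟨a, b, hab, h_sub⟩ := hQ.exists_Icc_subset_connectedComponentIn hx
  calc compInf Q x ≤ a := csInf_le (hQ.bddBelow_component x) (h_sub (left_mem_Icc.2 hab.le))
    _ < b := hab
    _ ≤ compSup Q x := le_csSup (hQ.bddAbove_component x) (h_sub (right_mem_Icc.2 hab.le))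

lemma connectedComponentIn_ae_eq_Ioc (hQ : IsPoolingSet Q) (hx : x ∈ Q) :
    connectedComponentIn Q x =ᵐ[volume] Ioc (compInf Q x) (compSup Q x) := by
  have h_Ioo : Ioo (compInf Q x) (compSup Q x) ⊆ connectedComponentIn Q x :=
    (isConnected_connectedComponentIn_iff.2 hx).Ioo_csInf_csSup_subset
      (hQ.bddBelow_component x) (hQ.bddAbove_component x)
  have h_Icc : connectedComponentIn Q x ⊆ Icc (compInf Q x) (compSup Q x) :=
    subset_Icc_csInf_csSup (hQ.bddBelow_component x) (hQ.bddAbove_component x)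
  exact (h_Icc.eventuallyLE.trans_eq Ioc_ae_eq_Icc.symm).antisymm
    (Ioo_ae_eq_Ioc.symm.trans_le h_Ioo.eventuallyLE)

lemma setIntegral_connectedComponentIn (hQ : IsPoolingSet Q) (hx : x ∈ Q) (g : ℝ → ℝ) :
    ∫ t in connectedComponentIn Q x, g t = ∫ t in compInf Q x..compSup Q x, g t := by
  rw [setIntegral_congr_set (hQ.connectedComponentIn_ae_eq_Ioc hx),
    intervalIntegral.integral_of_le (hQ.compInf_lt_compSup hx).le]

end IsPoolingSet

section PoolMean

variable {f : ℝ → ℝ} {Q : Set ℝ} {x y : ℝ}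

lemma poolMean_of_mem (hx : x ∈ Q) : poolMean f Q x = condMean f (compInf Q x) (compSup Q x) :=
  if_pos hx

lemma poolMean_of_notMem (hx : x ∉ Q) : poolMean f Q x = x :=
  if_neg hx

lemma poolMean_eq_of_mem_connectedComponentIn (hx : x ∈ Q) (hy : y ∈ connectedComponentIn Q x) :
    poolMean f Q y = poolMean f Q x := by
  rw [poolMean_of_mem hx, poolMean_of_mem (connectedComponentIn_subset Q x hy), compInf, compInf,
    compSup, compSup, connectedComponentIn_eq hy]

lemma aestronglyMeasurable_comp_poolMean (hQ : IsPoolingSet Q) {u : ℝ → ℝ}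
    (hu : ContinuousOn u (Icc 0 1)) (f : ℝ → ℝ) :
    AEStronglyMeasurable (fun t => u (poolMean f Q t)) (volume.restrict (Icc 0 1)) := by
  have h_rest : MeasurableSet (Icc 0 1 \ Q) := measurableSet_Icc.diff hQ.measurableSet
  have := hQ.countable_components.to_subtype
  rw [← union_sdiff_cancel hQ.subset_Icc]
  nth_rw 2 [← sUnion_components Q]
  rw [sUnion_eq_iUnion, aestronglyMeasurable_union_iff, aestronglyMeasurable_iUnion_iff]
  constructor
  · rintro ⟨_, x, hx, rfl⟩
    refine (aestronglyMeasurable_const (b := u (poolMean f Q x))).congr ?_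
    filter_upwards [ae_restrict_mem (measurableSet_of_mem_components ⟨x, hx, rfl⟩)] with t ht
    rw [poolMean_eq_of_mem_connectedComponentIn hx ht]
  · refine ((hu.mono sdiff_subset).aestronglyMeasurable h_rest).congr ?_
    filter_upwards [ae_restrict_mem h_rest] with t ht
    rw [poolMean_of_notMem ht.2]

end PoolMean

namespace IsDensity

variable {f p u : ℝ → ℝ} {Q : Set ℝ} {a b x : ℝ}

lemma intervalIntegrable (hf : IsDensity f) (ha : 0 ≤ a) (hab : a ≤ b) (hb : b ≤ 1) :
    IntervalIntegrable f volume a b :=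
  intervalIntegrable_of_integrableOn_Icc hf.2.1 ha hab hb

lemma pos_on_Ioo (hf : IsDensity f) (ha : 0 ≤ a) (hb : b ≤ 1) : ∀ t ∈ Ioo a b, 0 < f t :=
  fun t ht => hf.1 t ⟨ha.trans ht.1.le, ht.2.le.trans hb⟩

lemma condMean_mem_Ioo (hf : IsDensity f) (ha : 0 ≤ a) (hab : a < b) (hb : b ≤ 1) :
    condMean f a b ∈ Ioo a b :=
  _root_.condMean_mem_Ioo (hf.intervalIntegrable ha hab.le hb) (hf.pos_on_Ioo ha hb) hab

lemma integrableOn_mul (hf : IsDensity f) (hp : ContinuousOn p (Icc 0 1)) :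
    IntegrableOn (fun t => p t * f t) (Icc 0 1) :=
  hf.2.1.continuousOn_mul hp isCompact_Icc

lemma intervalIntegrable_mul (hf : IsDensity f) (hp : ContinuousOn p (Icc 0 1)) (ha : 0 ≤ a)
    (hab : a ≤ b) (hb : b ≤ 1) : IntervalIntegrable (fun t => p t * f t) volume a b :=
  intervalIntegrable_of_integrableOn_Icc (hf.integrableOn_mul hp) ha hab hb

lemma poolMean_mem_Icc (hf : IsDensity f) (hQ : IsPoolingSet Q) (hx : x ∈ Icc 0 1) :
    poolMean f Q x ∈ Icc 0 1 := by
  by_cases hxQ : x ∈ Q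
  · rw [poolMean_of_mem hxQ]
    exact Icc_subset_Icc (hQ.compInf_nonneg x) (hQ.compSup_le_one x) <| Ioo_subset_Icc_self <|
      hf.condMean_mem_Ioo (hQ.compInf_nonneg x) (hQ.compInf_lt_compSup hxQ) (hQ.compSup_le_one x)
  · rwa [poolMean_of_notMem hxQ]

lemma integrableOn_comp_poolMean_mul (hf : IsDensity f) (hQ : IsPoolingSet Q)
    (hu : ContinuousOn u (Icc 0 1)) :
    IntegrableOn (fun t => u (poolMean f Q t) * f t) (Icc 0 1) := by
  obtain ⟨B, hB⟩ := isCompact_Icc.exists_bound_of_continuousOn hu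
  refine Integrable.bdd_mul (c := B) hf.2.1 (aestronglyMeasurable_comp_poolMean hQ hu f) ?_
  filter_upwards [ae_restrict_mem measurableSet_Icc] with t ht
  exact hB _ (hf.poolMean_mem_Icc hQ ht)

end IsDensity

lemma poolValue_eq_setIntegral (f u : ℝ → ℝ) (Q : Set ℝ) :
    poolValue f u Q = ∫ t in Icc 0 1, u (poolMean f Q t) * f t := by
  rw [poolValue, intervalIntegral.integral_of_le zero_le_one, integral_Icc_eq_integral_Ioc]

lemma poolValue_mono {f u p : ℝ → ℝ} {Q : Set ℝ} (hf : IsDensity f) (hQ : IsPoolingSet Q)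
    (hu : ContinuousOn u (Icc 0 1)) (hp : ContinuousOn p (Icc 0 1))
    (h_le : ∀ x ∈ Icc (0 : ℝ) 1, u x ≤ p x) : poolValue f u Q ≤ poolValue f p Q := by
  rw [poolValue_eq_setIntegral, poolValue_eq_setIntegral]
  exact setIntegral_mono_on (hf.integrableOn_comp_poolMean_mul hQ hu)
    (hf.integrableOn_comp_poolMean_mul hQ hp) measurableSet_Icc fun t ht =>
      mul_le_mul_of_nonneg_right (h_le _ (hf.poolMean_mem_Icc hQ ht)) (hf.1 t ht).le

section ConvexPrice

variable {f p : ℝ → ℝ} {Q K : Set ℝ}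

lemma setIntegral_comp_poolMean_mul_le (hf : IsDensity f) (hQ : IsPoolingSet Q)
    (hp : ConvexOn ℝ (Icc 0 1) p) (hpc : ContinuousOn p (Icc 0 1)) (hK : K ∈ components Q) :
    ∫ t in K, p (poolMean f Q t) * f t ≤ ∫ t in K, p t * f t := by
  have h_meas := measurableSet_of_mem_components hK
  obtain ⟨x, hx, rfl⟩ := hK
  have h_lt := hQ.compInf_lt_compSup hx
  have h_nonneg := hQ.compInf_nonneg x
  have h_le_one := hQ.compSup_le_one x
  calc ∫ t in connectedComponentIn Q x, p (poolMean f Q t) * f t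
      = ∫ t in connectedComponentIn Q x, p (poolMean f Q x) * f t :=
        setIntegral_congr_fun h_meas fun t ht => by
          simp only [poolMean_eq_of_mem_connectedComponentIn hx ht]
    _ = p (poolMean f Q x) * ∫ t in compInf Q x..compSup Q x, f t := by
        rw [integral_const_mul, hQ.setIntegral_connectedComponentIn hx]
    _ ≤ ∫ t in compInf Q x..compSup Q x, p t * f t := by
        rw [poolMean_of_mem hx]
        exact map_condMean_mul_le_integral (hf.intervalIntegrable h_nonneg h_lt.le h_le_one)
          (hf.pos_on_Ioo h_nonneg h_le_one) h_lt
          (hp.subset (Icc_subset_Icc h_nonneg h_le_one) (convex_Icc _ _))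
          (hf.intervalIntegrable_mul hpc h_nonneg h_lt.le h_le_one)
    _ = ∫ t in connectedComponentIn Q x, p t * f t :=
        (hQ.setIntegral_connectedComponentIn hx _).symm

lemma poolValue_le_integral_of_convexOn (hf : IsDensity f) (hQ : IsPoolingSet Q)
    (hp : ConvexOn ℝ (Icc 0 1) p) (hpc : ContinuousOn p (Icc 0 1)) :
    poolValue f p Q ≤ ∫ t in (0 : ℝ)..1, p t * f t := by
  have h_rest : MeasurableSet (Icc 0 1 \ Q) := measurableSet_Icc.diff hQ.measurableSet
  have h_pooled := hf.integrableOn_comp_poolMean_mul hQ hpc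
  have h_price := hf.integrableOn_mul hpc
  have h_on : ∫ t in Q, p (poolMean f Q t) * f t ≤ ∫ t in Q, p t * f t := by
    have h_mono := setIntegral_sUnion_mono (μ := volume) hQ.countable_components
      (fun K => measurableSet_of_mem_components) (pairwiseDisjoint_components Q)
      (g := fun t => p (poolMean f Q t) * f t) (h := fun t => p t * f t)
    rw [sUnion_components] at h_mono
    exact h_mono (h_pooled.mono_set hQ.subset_Icc) (h_price.mono_set hQ.subset_Icc)
      fun K => setIntegral_comp_poolMean_mul_le hf hQ hp hpc
  have h_off : ∫ t in Icc 0 1 \ Q, p (poolMean f Q t) * f t = ∫ t in Icc 0 1 \ Q, p t * f t :=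
    setIntegral_congr_fun h_rest fun t ht => by simp only [poolMean_of_notMem ht.2]
  have h_split : ∀ {g : ℝ → ℝ}, IntegrableOn g (Icc 0 1) →
      ∫ t in Icc 0 1, g t = (∫ t in Q, g t) + ∫ t in Icc 0 1 \ Q, g t := fun {g} hg => by
    rw [← setIntegral_union disjoint_sdiff_right h_rest (hg.mono_set hQ.subset_Icc)
      (hg.mono_set sdiff_subset), union_sdiff_cancel hQ.subset_Icc]
  rw [poolValue_eq_setIntegral, intervalIntegral.integral_of_le zero_le_one,
    ← integral_Icc_eq_integral_Ioc, h_split h_pooled, h_split h_price, h_off]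
  gcongr

end ConvexPrice

section Censorship

variable {f u : ℝ → ℝ} {b s x : ℝ}

lemma isPoolingSet_Ico_zero (hb : b ≤ 1) : IsPoolingSet (Ico 0 b) := by
  refine ⟨Iio b, isOpen_Iio, ?_⟩
  ext x
  constructor
  · exact fun hx => ⟨hx.2, hx.1, hx.2.le.trans hb⟩
  · exact fun hx => ⟨hx.2.1, hx.1⟩

lemma poolMean_Ico {a : ℝ} (hx : x ∈ Ico a b) : poolMean f (Ico a b) x = condMean f a b := by
  have hab : a < b := hx.1.trans_lt hx.2
  rw [poolMean_of_mem hx, compInf, compSup, isPreconnected_Ico.connectedComponentIn hx,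
    csInf_Ico hab, csSup_Ico hab]

lemma poolValue_Ico_zero (hf : IsDensity f) (hu : ContinuousOn u (Icc 0 1)) (hb0 : 0 ≤ b)
    (hb1 : b ≤ 1) : poolValue f u (Ico 0 b)
      = u (condMean f 0 b) * (∫ t in (0 : ℝ)..b, f t) + ∫ t in b..1, u t * f t := by
  have h_int := hf.integrableOn_comp_poolMean_mul (isPoolingSet_Ico_zero hb1) hu
  rw [poolValue, ← intervalIntegral.integral_add_adjacent_intervals
    (intervalIntegrable_of_integrableOn_Icc h_int le_rfl hb0 hb1)
    (intervalIntegrable_of_integrableOn_Icc h_int hb0 hb1 le_rfl),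
    ← intervalIntegral.integral_const_mul]
  congr 1
  · refine intervalIntegral.integral_congr_Ioo_of_le hb0 fun t ht => ?_
    simp only [poolMean_Ico (Ioo_subset_Ico_self ht)]
  · refine intervalIntegral.integral_congr fun t ht => ?_
    rw [uIcc_of_le hb1] at ht
    simp only [poolMean_of_notMem fun h : t ∈ Ico 0 b => h.2.not_ge ht.1]

lemma integral_censorshipPrice_mul (hf : IsDensity f) (hu : ContinuousOn u (Icc 0 1))
    (hb0 : 0 < b) (hb1 : b ≤ 1) (h_tan : tangentLine u s (condMean f 0 b) b = u b) :
    ∫ t in (0 : ℝ)..1, censorshipPrice u s (condMean f 0 b) b t * f t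
      = poolValue f u (Ico 0 b) := by
  set p := censorshipPrice u s (condMean f 0 b) b
  have hp : ContinuousOn p (Icc 0 1) := continuousOn_censorshipPrice hu ⟨hb0.le, hb1⟩
  have hf_int := hf.intervalIntegrable le_rfl hb0.le hb1
  have h_mass : 0 < ∫ t in (0 : ℝ)..b, f t :=
    intervalIntegral.intervalIntegral_pos_of_pos_on hf_int (hf.pos_on_Ioo le_rfl hb1) hb0
  rw [poolValue_Ico_zero hf hu hb0.le hb1,
    ← integral_tangentLine_condMean_mul hf_int h_mass.ne' u s,
    ← intervalIntegral.integral_add_adjacent_intervals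
      (hf.intervalIntegrable_mul hp le_rfl hb0.le hb1)
      (hf.intervalIntegrable_mul hp hb0.le hb1 le_rfl)]
  congr 1
  · refine intervalIntegral.integral_congr fun t ht => ?_
    rw [uIcc_of_le hb0.le] at ht
    simp only [p, censorshipPrice_of_le h_tan ht.2]
  · refine intervalIntegral.integral_congr fun t ht => ?_
    rw [uIcc_of_le hb1] at ht
    simp only [p, censorshipPrice_of_ge ht.1]

end Censorship

namespace C1AC

variable {u u' u'' : ℝ → ℝ} {a b : ℝ}

lemma continuousOn (hu : C1AC u u' u'') : ContinuousOn u (Icc 0 1) :=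
  fun x hx => (hu.1 x hx).continuousAt.continuousWithinAt

lemma neg (hu : C1AC u u' u'') : C1AC (-u) (-u') (-u'') := by
  obtain ⟨h_deriv, h_cont, h_int, h_ftc⟩ := hu
  refine ⟨fun x hx => (h_deriv x hx).neg, h_cont.neg, h_int.neg, fun x hx => ?_⟩
  simp only [Pi.neg_apply, intervalIntegral.integral_neg, h_ftc x hx]
  ring

lemma sub_eq_integral (hu : C1AC u u' u'') (ha : 0 ≤ a) (hab : a ≤ b) (hb : b ≤ 1) :
    u' b - u' a = ∫ t in a..b, u'' t := by
  obtain ⟨-, -, h_int, h_ftc⟩ := hu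
  rw [h_ftc b ⟨ha.trans hab, hb⟩, h_ftc a ⟨ha, hab.trans hb⟩, add_sub_add_left_eq_sub,
    intervalIntegral.integral_interval_sub_left
      (intervalIntegrable_of_integrableOn_Icc h_int le_rfl (ha.trans hab) hb)
      (intervalIntegrable_of_integrableOn_Icc h_int le_rfl ha (hab.trans hb))]

lemma strictConvexOn_Icc (hu : C1AC u u' u'') (ha : 0 ≤ a) (hb : b ≤ 1)
    (h_pos : ∀ t ∈ Ioo a b, 0 < u'' t) : StrictConvexOn ℝ (Icc a b) u := by
  have h_sub : Icc a b ⊆ Icc 0 1 := Icc_subset_Icc ha hb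
  refine StrictMonoOn.strictConvexOn_of_deriv (convex_Icc a b) (hu.continuousOn.mono h_sub) ?_
  rw [interior_Icc]
  intro x hx y hy hxy
  rw [(hu.1 x (h_sub (Ioo_subset_Icc_self hx))).deriv,
    (hu.1 y (h_sub (Ioo_subset_Icc_self hy))).deriv, ← sub_pos,
    hu.sub_eq_integral (ha.trans hx.1.le) hxy.le (hy.2.le.trans hb)]
  refine intervalIntegral.intervalIntegral_pos_of_pos_on ?_
    (fun t ht => h_pos t ⟨hx.1.trans ht.1, ht.2.trans hy.2⟩) hxy
  exact intervalIntegrable_of_integrableOn_Icc hu.2.2.1 (ha.trans hx.1.le) hxy.le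
    (hy.2.le.trans hb)

lemma strictConcaveOn_Icc (hu : C1AC u u' u'') (ha : 0 ≤ a) (hb : b ≤ 1)
    (h_neg : ∀ t ∈ Ioo a b, u'' t < 0) : StrictConcaveOn ℝ (Icc a b) u :=
  neg_strictConvexOn_iff.1 <| hu.neg.strictConvexOn_Icc ha hb fun t ht => neg_pos.2 (h_neg t ht)

end C1AC

theorem censorship_optimal_general {f u : ℝ → ℝ} {θL θsL s : ℝ} (hf : IsDensity f)
    (hu : ContinuousOn u (Icc 0 1)) (hθL : 0 < θL) (h_concave : ConcaveOn ℝ (Icc 0 θL) u)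
    (h_convex : StrictConvexOn ℝ (Icc θL 1) u) (hθsL : θsL ∈ Ioc θL 1)
    (hs : HasDerivAt u s (condMean f 0 θsL))
    (h_tan : u (condMean f 0 θsL) + s * (θsL - condMean f 0 θsL) = u θsL) :
    IsOptimal f u (Ico 0 θsL) ∧ condMean f 0 θsL ∈ Ioo 0 θL := by
  obtain ⟨hθ, hθ1⟩ := hθsL
  have hθ0 : 0 < θsL := hθL.trans hθ
  set m := condMean f 0 θsL
  obtain ⟨hm0, hmθ⟩ : m ∈ Ioo 0 θsL := hf.condMean_mem_Ioo le_rfl hθ0 hθ1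
  have hmL : m < θL := lt_of_tangentLine_eq h_convex hs hmθ hθ1 h_tan
  refine ⟨⟨isPoolingSet_Ico_zero hθ1, fun Q hQ => ?_⟩, hm0, hmL⟩
  have hm : m ∈ Icc 0 θL := ⟨hm0.le, hmL.le⟩
  set p := censorshipPrice u s m θsL
  have hpc : ContinuousOn p (Icc 0 1) := continuousOn_censorshipPrice hu ⟨hθ0.le, hθ1⟩
  have hp : ConvexOn ℝ (Icc 0 1) p :=
    (convexOn_censorshipPrice h_concave h_convex.convexOn hs hm ⟨hθ, hθ1⟩ h_tan).subset
      Icc_subset_Iic_self (convex_Icc 0 1)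
  calc poolValue f u Q
      ≤ poolValue f p Q := poolValue_mono hf hQ hu hpc fun x hx =>
        le_censorshipPrice h_concave h_convex.convexOn hs hm ⟨hθ.le, hθ1⟩ h_tan hx.1
    _ ≤ ∫ t in (0 : ℝ)..1, p t * f t := poolValue_le_integral_of_convexOn hf hQ hp hpc
    _ = poolValue f u (Ico 0 θsL) := integral_censorshipPrice_mul hf hu hθ0 hθ1 h_tan

/-- one inflection point `θ^L`; if the tangency condition holds at
some `θ_*^L ∈ (θ^L,1)` with `m_*^L = E_F[θ|(0,θ_*^L)]`, then the pooling set
`[0,θ_*^L)` is optimal for `u`, and `m_*^L ∈ (0,θ^L)`. -/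
theorem censorship_optimal (f : ℝ → ℝ) (hf : IsDensity f)
    (u u' u'' : ℝ → ℝ) (hu : C1AC u u' u'')
    (θL : ℝ) (hθL : θL ∈ Ioo (0:ℝ) 1)
    (hneg : ∀ θ ∈ Ico (0:ℝ) θL, u'' θ < 0)
    (hpos : ∀ θ ∈ Ioc θL (1:ℝ), 0 < u'' θ)
    (θsL : ℝ) (hθsL : θsL ∈ Ioo θL 1)
    (htan : u (condMean f 0 θsL) +
        u' (condMean f 0 θsL) * (θsL - condMean f 0 θsL) = u θsL) :
    IsOptimal f u (Ico (0:ℝ) θsL) ∧ condMean f 0 θsL ∈ Ioo 0 θL := by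
  have hm : condMean f 0 θsL ∈ Ioo 0 θsL :=
    hf.condMean_mem_Ioo le_rfl (hθL.1.trans hθsL.1) hθsL.2.le
  have h_concave : StrictConcaveOn ℝ (Icc 0 θL) u :=
    hu.strictConcaveOn_Icc le_rfl hθL.2.le fun t ht => hneg t (Ioo_subset_Ico_self ht)
  have h_convex : StrictConvexOn ℝ (Icc θL 1) u :=
    hu.strictConvexOn_Icc hθL.1.le le_rfl fun t ht => hpos t (Ioo_subset_Ioc_self ht)
  exact censorship_optimal_general hf hu.continuousOn hθL.1 h_concave.concaveOn h_convex
    (Ioo_subset_Ioc_self hθsL) (hu.1 _ ⟨hm.1.le, hm.2.le.trans hθsL.2.le⟩) htan
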